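/- arXiv:math/0405124 — 2 statements merged into one kernel-verified Lean document; each statement's English description precedes it below -/
import Mathlib

section
/- Let D be an integral domain that is not a field and let ⋆ be a semistar operation on D. If D is a ⋆-almost Dedekind domain, then D is a Prüfer ⋆-multiplication domain and every quasi-⋆_f-prime ideal of D is a quasi-⋆_f-maximal ideal of D. -/
open scoped Pointwise

section SemistarDefs

variable {D : Type*} [CommRing D] [IsDomain D]
variable {K : Type*} [Field K] [Algebra D K] [IsFractionRing D K]

/-- `star` is a semistar operation on the integral domain `D` with quotient field `K`:
a map on (nonzero) `D`-submodules of `K` satisfying `(xE)^⋆ = x·E^⋆`, monotonicity,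
extensivity and idempotence. -/
structure IsSemistarOperation (star : Submodule D K → Submodule D K) : Prop where
  ne_bot : ∀ {E : Submodule D K}, E ≠ ⊥ → star E ≠ ⊥
  map_smul : ∀ (x : K), x ≠ 0 → ∀ {E : Submodule D K}, E ≠ ⊥ →
    star (Submodule.map (LinearMap.mulLeft D x) E) = Submodule.map (LinearMap.mulLeft D x) (star E)
  mono : ∀ {E F : Submodule D K}, E ≠ ⊥ → F ≠ ⊥ → E ≤ F → star E ≤ star F
  le_star : ∀ {E : Submodule D K}, E ≠ ⊥ → E ≤ star E
  star_star : ∀ {E : Submodule D K}, E ≠ ⊥ → star (star E) = star E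

/-- The image in `K` of an ideal `I` of `D`, as a `D`-submodule of `K`. -/
def idealExt (K : Type*) [Field K] [Algebra D K] (I : Ideal D) : Submodule D K :=
  Submodule.map (Algebra.linearMap D K) I

/-- `I` is a quasi-⋆-ideal: a nonzero ideal of `D` with `I = I^⋆ ∩ D`. -/
def QuasiStarIdeal (star : Submodule D K → Submodule D K) (I : Ideal D) : Prop :=
  I ≠ ⊥ ∧ Submodule.comap (Algebra.linearMap D K) (star (idealExt K I)) = I

/-- `P` is a quasi-⋆-prime: a prime ideal which is a quasi-⋆-ideal. -/
def QuasiStarPrime (star : Submodule D K → Submodule D K) (P : Ideal D) : Prop :=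
  P.IsPrime ∧ QuasiStarIdeal star P

/-- `M` is a quasi-⋆-maximal ideal: maximal in the set of proper quasi-⋆-ideals of `D`. -/
def QuasiStarMaximal (star : Submodule D K → Submodule D K) (M : Ideal D) : Prop :=
  QuasiStarIdeal star M ∧ M ≠ ⊤ ∧
    ∀ J : Ideal D, QuasiStarIdeal star J → J ≠ ⊤ → M ≤ J → J = M

/-- The finite-type semistar operation `⋆_f` associated to `⋆`:
`E^{⋆_f} = ⋃ { F^⋆ : F nonzero finitely generated, F ⊆ E }`. -/
def finTypeOp (star : Submodule D K → Submodule D K) : Submodule D K → Submodule D K :=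
  fun E => ⨆ (F : Submodule D K) (_ : F ≠ ⊥) (_ : F.FG) (_ : F ≤ E), star F

/-- The extension `E·D_Q` of a `D`-submodule `E` of `K` to the localization of `D` at
(the complement of) `Q`, described as `{ x ∈ K : s·x ∈ E for some s ∉ Q }`. -/
def extendToPrime (Q : Ideal D) (E : Submodule D K) : Submodule D K :=
  Submodule.span D {x : K | ∃ s : D, s ∉ Q ∧ algebraMap D K s * x ∈ E}

/-- The stable semistar operation of finite type `⋆̃` associated to `⋆`:
`E^⋆̃ = ⋂ { E·D_Q : Q a quasi-⋆_f-maximal ideal of D }`. -/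
def stableOp (star : Submodule D K → Submodule D K) : Submodule D K → Submodule D K :=
  fun E => ⨅ (Q : Ideal D) (_ : QuasiStarMaximal (finTypeOp star) Q), extendToPrime Q E

/-- A rank-one discrete valuation ring: a (domain which is a) local PID which is not a field. -/
def IsDVR (R : Type*) [CommRing R] : Prop :=
  ∃ h : IsDomain R, @IsDiscreteValuationRing R _ h

/-- A valuation domain. -/
def IsValuationDomain (R : Type*) [CommRing R] : Prop :=
  ∃ h : IsDomain R, @ValuationRing R _ h

/-- `D` is a ⋆-almost Dedekind domain: `D_M` is a rank-one discrete valuation ring for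
every quasi-⋆_f-maximal ideal `M` of `D`. -/
def StarADD (star : Submodule D K → Submodule D K) : Prop :=
  ∀ (M : Ideal D) [M.IsPrime], QuasiStarMaximal (finTypeOp star) M →
    IsDVR (Localization.AtPrime M)

/-- `D` is a Prüfer ⋆-multiplication domain: `D_M` is a valuation domain for every
quasi-⋆_f-maximal ideal `M` of `D`. -/
def StarPMD (star : Submodule D K → Submodule D K) : Prop :=
  ∀ (M : Ideal D) [M.IsPrime], QuasiStarMaximal (finTypeOp star) M →
    IsValuationDomain (Localization.AtPrime M)

/-- `D` is ⋆-Noetherian: ascending chain condition on quasi-⋆-ideals. -/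
def StarNoetherian (star : Submodule D K → Submodule D K) : Prop :=
  ∀ c : ℕ →o Ideal D, (∀ n, QuasiStarIdeal star (c n)) → ∃ n, ∀ m, n ≤ m → c m = c n

/-- `D` is a ⋆-Dedekind domain: ⋆-Noetherian and a P⋆MD. -/
def StarDedekind (star : Submodule D K → Submodule D K) : Prop :=
  StarNoetherian star ∧ StarPMD star

/-- `D` has the ⋆_f-finite character property: every nonzero element of `D` lies in only
finitely many quasi-⋆_f-maximal ideals. -/
def StarFiniteCharacter (star : Submodule D K → Submodule D K) : Prop :=
  ∀ d : D, d ≠ 0 → {M : Ideal D | QuasiStarMaximal (finTypeOp star) M ∧ d ∈ M}.Finite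

/-- The `v`-operation `E ↦ (D : (D : E))`. -/
def vOp : Submodule D K → Submodule D K := fun E => 1 / (1 / E)

/-- A nonzero `D`-submodule `E` of `K` is quasi-∗-invertible if `(E·(D^∗ : E))^∗ = D^∗`. -/
def QuasiStarInvertible (star : Submodule D K → Submodule D K) (E : Submodule D K) : Prop :=
  star (E * (star 1 / E)) = star (1 : Submodule D K)

/-- `D` has the ∗-cancellation law: for nonzero fractional ideals `A`, `B`, `C`,
`(AB)^∗ = (AC)^∗` implies `B^∗ = C^∗`. -/
def StarCancellation (star : Submodule D K → Submodule D K) : Prop :=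
  ∀ A B C : Submodule D K, A ≠ ⊥ → B ≠ ⊥ → C ≠ ⊥ →
    IsFractional (nonZeroDivisors D) A → IsFractional (nonZeroDivisors D) B →
    IsFractional (nonZeroDivisors D) C →
    star (A * B) = star (A * C) → star B = star C

/-- The ∗-dimension of `D`: the supremum of the lengths of chains of quasi-∗-prime ideals
of `D` (between `(0)` and a quasi-∗-prime). -/
noncomputable def starDim (star : Submodule D K → Submodule D K) : ℕ∞ :=
  ⨆ (k : ℕ) (_ : ∃ c : Fin k → Ideal D, StrictMono c ∧ ∀ i, QuasiStarPrime star (c i)),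
    (k : ℕ∞)

/-- A submodule `T` of `K` (containing the image of an integral domain with quotient
field `K`) is integrally closed (in `K`) if every `x ∈ K` satisfying a monic polynomial
equation with coefficients in `T` belongs to `T`. -/
def IntegrallyClosedSub (T : Submodule D K) : Prop :=
  ∀ x : K, (∃ (n : ℕ) (c : Fin n → K), (∀ i, c i ∈ T) ∧
    x ^ n = ∑ i : Fin n, c i * x ^ (i : ℕ)) → x ∈ T

/-- The content ideal `c(p)` of a polynomial: the ideal generated by its coefficients. -/
def contentIdeal (p : Polynomial D) : Ideal D := Ideal.span (Set.range p.coeff)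

/-- The multiplicative set `N(⋆) = { h ∈ D[X] : h ≠ 0, c(h)^⋆ = D^⋆ }` (as a submonoid,
via the closure of this multiplicatively closed set). -/
noncomputable def nagataMonoid (star : Submodule D K → Submodule D K) : Submonoid (Polynomial D) :=
  Submonoid.closure
    {p : Polynomial D | p ≠ 0 ∧ star (idealExt K (contentIdeal p)) = star (1 : Submodule D K)}

/-- The Nagata ring `Na(D,⋆) = D[X]_{N(⋆)}`. -/
abbrev NagataRing (star : Submodule D K → Submodule D K) :=
  Localization (nagataMonoid star)

/-- `V` is a valuation overring of `D` (inside the quotient field `K`): `D ⊆ V ⊆ K` and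
for every nonzero `x ∈ K`, `x ∈ V` or `x⁻¹ ∈ V`. -/
def IsValuationOverring (D : Type*) [CommRing D] {K : Type*} [Field K] [Algebra D K]
    (V : Subring K) : Prop :=
  (∀ d : D, algebraMap D K d ∈ V) ∧ ∀ x : K, x ≠ 0 → (x ∈ V ∨ x⁻¹ ∈ V)

/-- `V` is a ∗-valuation overring of `D`: a valuation overring such that `F^∗ ⊆ FV` for
every nonzero finitely generated `D`-submodule `F` of `K`. -/
def IsStarValuationOverring (star : Submodule D K → Submodule D K) (V : Subring K) : Prop :=
  IsValuationOverring D V ∧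
    ∀ F : Submodule D K, F ≠ ⊥ → F.FG →
      star F ≤ Submodule.span D ((F : Set K) * (V : Set K))

/-- `D` is a Krull domain: there is a family of rank-one discrete valuation overrings of `D`
with quotient field `K` whose intersection is `D`, with finite character. -/
def IsKrullDomain (D : Type*) [CommRing D] (K : Type*) [Field K] [Algebra D K] : Prop :=
  ∃ 𝒱 : Set (Subring K),
    (∀ V ∈ 𝒱, (∀ d : D, algebraMap D K d ∈ V) ∧ IsDVR V ∧
      ∀ x : K, ∃ a ∈ V, ∃ b ∈ V, b ≠ 0 ∧ x * b = a) ∧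
    (⋂ V ∈ 𝒱, (V : Set K)) = Set.range (algebraMap D K) ∧
    ∀ d : D, d ≠ 0 → {V ∈ 𝒱 | ¬ ∃ y ∈ V, algebraMap D K d * y = 1}.Finite

end SemistarDefs

/-!
A valuation ring is all that a Prüfer `⋆`-multiplication domain asks of `D_M`, and a DVR is one.
For the second claim, `⋆_f` is of finite type, so the union of a chain of proper quasi-`⋆_f`-ideals
is again one, and Zorn's lemma puts a quasi-`⋆_f`-prime `P` inside a quasi-`⋆_f`-maximal ideal `M`.
Quasi-`⋆`-ideals are stable under colons: from `s (I : s) ⊆ I` one gets `s (I : s)^⋆ ⊆ I^⋆`.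
Hence for `b ∉ M` the proper quasi-`⋆_f`-ideal `(M : b)`, which contains `M`, equals `M`; that is,
`M` is prime. Now `P D_M` is a nonzero prime of the DVR `D_M`, hence its maximal ideal, and
contracting to `D` gives `P = M`.
-/

section Localization

theorem IsDVR.isValuationDomain {R : Type*} [CommRing R] (hR : IsDVR R) : IsValuationDomain R := by
  obtain ⟨hdom, _⟩ := hR
  exact ⟨hdom, inferInstance⟩

theorem IsDVR.dimensionLEOne {R : Type*} [CommRing R] (hR : IsDVR R) : Ring.DimensionLEOne R := by
  obtain ⟨_, _⟩ := hR
  infer_instance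

theorem eq_of_le_of_dimensionLEOne_localization {R : Type*} [CommRing R] [IsDomain R]
    {P M : Ideal R} [hP : P.IsPrime] [M.IsPrime] (S : Type*) [CommRing S] [Algebra R S]
    [IsLocalization.AtPrime S M] [Ring.DimensionLEOne S] (hP0 : P ≠ ⊥) (hPM : P ≤ M) : P = M := by
  have := IsLocalization.AtPrime.isLocalRing S M
  have hdisj : Disjoint (M.primeCompl : Set R) (P : Set R) :=
    Set.disjoint_left.2 fun _ hx hxP => hx (hPM hxP)
  have hprime : (P.map (algebraMap R S)).IsPrime :=
    IsLocalization.isPrime_of_isPrime_disjoint M.primeCompl S P hP hdisj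
  have hne : P.map (algebraMap R S) ≠ ⊥ := fun h => hP0 <|
    (Ideal.map_eq_bot_iff_of_injective
      (IsLocalization.injective S M.primeCompl_le_nonZeroDivisors)).1 h
  calc
    P = (P.map (algebraMap R S)).under R :=
      (IsLocalization.under_map_of_isPrime_disjoint M.primeCompl S hP hdisj).symm
    _ = (IsLocalRing.maximalIdeal S).under R := by
      rw [IsLocalRing.eq_maximalIdeal (hprime.isMaximal hne)]
    _ = M := IsLocalization.AtPrime.under_maximalIdeal S M

end Localization

section Submodule

theorem map_mulLeft_map_mulLeft_of_mul_eq_one {R A : Type*} [CommSemiring R] [Semiring A]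
    [Algebra R A] {x y : A} (hxy : x * y = 1) (E : Submodule R A) :
    (E.map (LinearMap.mulLeft R y)).map (LinearMap.mulLeft R x) = E := by
  rw [← Submodule.map_comp, ← LinearMap.mulLeft_mul, hxy, LinearMap.mulLeft_one, Submodule.map_id]

theorem exists_mem_le_map_of_fg_of_le_map_sSup {R M N : Type*} [Semiring R] [AddCommMonoid M]
    [Module R M] [AddCommMonoid N] [Module R N] {f : M →ₗ[R] N} {c : Set (Submodule R M)}
    (hne : c.Nonempty) (hdir : DirectedOn (· ≤ ·) c) {F : Submodule R N} (hF : F.FG)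
    (hFc : F ≤ (sSup c).map f) : ∃ I ∈ c, F ≤ I.map f := by
  have hdir_map : DirectedOn (· ≤ ·) (Submodule.map f '' c) :=
    directedOn_image.2 <| hdir.mono fun _ _ h => Submodule.map_mono h
  rw [(Submodule.gc_map_comap f).l_sSup, ← sSup_image] at hFc
  obtain ⟨_, ⟨I, hI, rfl⟩, hFI⟩ :=
    (Submodule.fg_iff_compact F).1 hF _ _ (hne.image _) hdir_map (isLUB_sSup _) hFc
  exact ⟨I, hI, hFI⟩

end Submodule

section Semistar

variable {D K : Type*} [CommRing D] [Field K] [Algebra D K]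
variable {star : Submodule D K → Submodule D K} {E F : Submodule D K}

theorem map_mulLeft_ne_bot {x : K} (hx : x ≠ 0) (hE : E ≠ ⊥) :
    E.map (LinearMap.mulLeft D x) ≠ ⊥ := fun h => hE <| by
  rw [← map_mulLeft_map_mulLeft_of_mul_eq_one (inv_mul_cancel₀ hx) E, h, Submodule.map_bot]

theorem idealExt_ne_bot [FaithfulSMul D K] {I : Ideal D} (hI : I ≠ ⊥) : idealExt K I ≠ ⊥ :=
  fun h => hI <| Submodule.map_injective_of_injective
    (f := Algebra.linearMap D K) (FaithfulSMul.algebraMap_injective D K)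
    (h.trans (Submodule.map_bot _).symm)

theorem star_le_finTypeOp (hF : F ≠ ⊥) (hFG : F.FG) (hFE : F ≤ E) : star F ≤ finTypeOp star E :=
  le_iSup₂_of_le F hF <| le_iSup₂_of_le hFG hFE le_rfl

theorem finTypeOp_mono (hEF : E ≤ F) : finTypeOp star E ≤ finTypeOp star F :=
  iSup₂_le fun _ hG => iSup₂_le fun hGfg hGE => star_le_finTypeOp hG hGfg (hGE.trans hEF)

namespace IsSemistarOperation

theorem exists_fg_le_star_of_le_finTypeOp (hstar : IsSemistarOperation star) (hE : E ≠ ⊥)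
    {G : Submodule D K} (hG : G.FG) (hGE : G ≤ finTypeOp star E) :
    ∃ F : Submodule D K, F ≠ ⊥ ∧ F.FG ∧ F ≤ E ∧ G ≤ star F := by
  let S : Set (Submodule D K) := {F | F ≠ ⊥ ∧ F.FG ∧ F ≤ E}
  have hne : S.Nonempty := by
    obtain ⟨x, hxE, hx⟩ := Submodule.exists_mem_ne_zero_of_ne_bot hE
    exact ⟨Submodule.span D {x}, by simpa using hx, Submodule.fg_span_singleton x,
      by simpa using hxE⟩
  have hdir : DirectedOn (· ≤ ·) (star '' S) := by
    rintro _ ⟨F₁, ⟨h₁, hfg₁, hle₁⟩, rfl⟩ _ ⟨F₂, ⟨h₂, hfg₂, hle₂⟩, rfl⟩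
    have hsup : F₁ ⊔ F₂ ≠ ⊥ := ne_bot_of_le_ne_bot h₁ le_sup_left
    exact ⟨_, ⟨F₁ ⊔ F₂, ⟨hsup, hfg₁.sup hfg₂, sup_le hle₁ hle₂⟩, rfl⟩,
      hstar.mono h₁ hsup le_sup_left, hstar.mono h₂ hsup le_sup_right⟩
  have hGS : G ≤ sSup (star '' S) := hGE.trans <|
    iSup₂_le fun F hF => iSup₂_le fun hfg hle => le_sSup ⟨F, ⟨hF, hfg, hle⟩, rfl⟩
  obtain ⟨_, ⟨F, ⟨hF, hfg, hle⟩, rfl⟩, hGF⟩ :=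
    (Submodule.fg_iff_compact G).1 hG _ _ (hne.image _) hdir (isLUB_sSup _) hGS
  exact ⟨F, hF, hfg, hle, hGF⟩

theorem mem_finTypeOp (hstar : IsSemistarOperation star) (hE : E ≠ ⊥) {x : K} :
    x ∈ finTypeOp star E ↔ ∃ F : Submodule D K, F ≠ ⊥ ∧ F.FG ∧ F ≤ E ∧ x ∈ star F := by
  refine ⟨fun hx => ?_, fun ⟨F, hF, hfg, hle, hx⟩ => star_le_finTypeOp hF hfg hle hx⟩
  simpa only [Submodule.span_singleton_le_iff_mem] using
    hstar.exists_fg_le_star_of_le_finTypeOp hE (Submodule.fg_span_singleton x)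
      ((Submodule.span_singleton_le_iff_mem x _).2 hx)

theorem le_finTypeOp (hstar : IsSemistarOperation star) (E : Submodule D K) :
    E ≤ finTypeOp star E := by
  intro x hx
  rcases eq_or_ne x 0 with rfl | hx0
  · exact zero_mem _
  have hspan : Submodule.span D {x} ≠ ⊥ := by simpa using hx0
  exact star_le_finTypeOp hspan (Submodule.fg_span_singleton x)
    ((Submodule.span_singleton_le_iff_mem x E).2 hx)
    (hstar.le_star hspan (Submodule.mem_span_singleton_self x))

theorem map_mulLeft_finTypeOp_le (hstar : IsSemistarOperation star) {x : K} (hx : x ≠ 0)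
    (E : Submodule D K) : (finTypeOp star E).map (LinearMap.mulLeft D x) ≤
      finTypeOp star (E.map (LinearMap.mulLeft D x)) := by
  rw [Submodule.map_le_iff_le_comap]
  refine iSup₂_le fun F hF => iSup₂_le fun hfg hle => ?_
  rw [← Submodule.map_le_iff_le_comap, ← hstar.map_smul x hx hF]
  exact star_le_finTypeOp (map_mulLeft_ne_bot hx hF) (hfg.map _) (Submodule.map_mono hle)

theorem finTypeOp_finTypeOp_le (hstar : IsSemistarOperation star) (hE : E ≠ ⊥) :
    finTypeOp star (finTypeOp star E) ≤ finTypeOp star E := by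
  refine iSup₂_le fun G hG => iSup₂_le fun hGfg hGE => ?_
  obtain ⟨F, hF, hfg, hle, hGF⟩ := hstar.exists_fg_le_star_of_le_finTypeOp hE hGfg hGE
  calc
    star G ≤ star (star F) := hstar.mono hG (hstar.ne_bot hF) hGF
    _ = star F := hstar.star_star hF
    _ ≤ finTypeOp star E := star_le_finTypeOp hF hfg hle

protected theorem finTypeOp (hstar : IsSemistarOperation star) :
    IsSemistarOperation (finTypeOp star) where
  ne_bot {E} hE := ne_bot_of_le_ne_bot hE (hstar.le_finTypeOp E)
  map_smul x hx E _ := by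
    refine le_antisymm ?_ (hstar.map_mulLeft_finTypeOp_le hx E)
    have hinv := hstar.map_mulLeft_finTypeOp_le (inv_ne_zero hx) (E.map (LinearMap.mulLeft D x))
    rw [map_mulLeft_map_mulLeft_of_mul_eq_one (inv_mul_cancel₀ hx)] at hinv
    simpa only [map_mulLeft_map_mulLeft_of_mul_eq_one (mul_inv_cancel₀ hx)] using
      Submodule.map_mono (f := LinearMap.mulLeft D x) hinv
  mono _ _ := finTypeOp_mono
  le_star {E} _ := hstar.le_finTypeOp E
  star_star {E} hE := (hstar.finTypeOp_finTypeOp_le hE).antisymm (hstar.le_finTypeOp _)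

theorem quasiStarIdeal_iff [FaithfulSMul D K] (hstar : IsSemistarOperation star) {I : Ideal D} :
    QuasiStarIdeal star I ↔
      I ≠ ⊥ ∧ ∀ a : D, algebraMap D K a ∈ star (idealExt K I) → a ∈ I :=
  and_congr_right fun hI => ⟨fun h _ ha => h.le ha, fun h => le_antisymm h fun _ ha =>
    hstar.le_star (idealExt_ne_bot hI) (Submodule.mem_map_of_mem ha)⟩

end IsSemistarOperation

variable [FaithfulSMul D K]

theorem QuasiStarIdeal.colon (hstar : IsSemistarOperation star) {I : Ideal D}
    (hI : QuasiStarIdeal star I) (S : Set D) : QuasiStarIdeal star (I.colon S) := by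
  have hne : I.colon S ≠ ⊥ := ne_bot_of_le_ne_bot hI.1 Ideal.le_colon
  refine hstar.quasiStarIdeal_iff.2 ⟨hne, fun a ha => Submodule.mem_colon.2 fun s hs => ?_⟩
  rcases eq_or_ne s 0 with rfl | hs0
  · simp
  have hsK : algebraMap D K s ≠ 0 := by simpa using hs0
  have hsI : (idealExt K (I.colon S)).map (LinearMap.mulLeft D (algebraMap D K s)) ≤
      idealExt K I := by
    rintro _ ⟨_, ⟨b, hb, rfl⟩, rfl⟩
    exact ⟨b * s, Submodule.mem_colon.1 hb s hs, by simp [mul_comm]⟩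
  have hmono := hstar.mono (map_mulLeft_ne_bot hsK (idealExt_ne_bot hne)) (idealExt_ne_bot hI.1) hsI
  rw [hstar.map_smul _ hsK (idealExt_ne_bot hne)] at hmono
  refine (hstar.quasiStarIdeal_iff.1 hI).2 _ (hmono ⟨_, ha, ?_⟩)
  simp [mul_comm]

theorem QuasiStarMaximal.isPrime (hstar : IsSemistarOperation star) {M : Ideal D}
    (hM : QuasiStarMaximal star M) : M.IsPrime := by
  obtain ⟨hquasi, hne_top, hmax⟩ := hM
  refine Ideal.isPrime_iff.2 ⟨hne_top, fun {a b} hab => or_iff_not_imp_right.2 fun hb => ?_⟩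
  have hcolon : M.colon {b} = M :=
    hmax _ (hquasi.colon hstar {b}) (by simpa [Submodule.colon_eq_top_iff_subset] using hb)
      Ideal.le_colon
  exact hcolon ▸ Submodule.mem_colon_singleton.2 hab

theorem quasiStarIdeal_finTypeOp_sSup (hstar : IsSemistarOperation star) {c : Set (Ideal D)}
    (hne : c.Nonempty) (hdir : DirectedOn (· ≤ ·) c)
    (hc : ∀ I ∈ c, QuasiStarIdeal (finTypeOp star) I) :
    QuasiStarIdeal (finTypeOp star) (sSup c) := by
  obtain ⟨J, hJ⟩ := hne
  have hbot : sSup c ≠ ⊥ := ne_bot_of_le_ne_bot (hc J hJ).1 (le_sSup hJ)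
  refine hstar.finTypeOp.quasiStarIdeal_iff.2 ⟨hbot, fun a ha => ?_⟩
  obtain ⟨F, hF, hfg, hle, haF⟩ := (hstar.mem_finTypeOp (idealExt_ne_bot hbot)).1 ha
  obtain ⟨I, hI, hFI⟩ := exists_mem_le_map_of_fg_of_le_map_sSup ⟨J, hJ⟩ hdir hfg hle
  exact le_sSup hI <|
    (hstar.finTypeOp.quasiStarIdeal_iff.1 (hc I hI)).2 a (star_le_finTypeOp hF hfg hFI haF)

theorem QuasiStarIdeal.exists_le_quasiStarMaximal (hstar : IsSemistarOperation star) {I : Ideal D}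
    (hI : QuasiStarIdeal (finTypeOp star) I) (hI_top : I ≠ ⊤) :
    ∃ M, I ≤ M ∧ QuasiStarMaximal (finTypeOp star) M := by
  let proper : Set (Ideal D) := {J | QuasiStarIdeal (finTypeOp star) J ∧ J ≠ ⊤}
  have hchains : ∀ c ⊆ proper, IsChain (· ≤ ·) c → ∀ J ∈ c, ∃ ub ∈ proper, ∀ L ∈ c, L ≤ ub := by
    intro c hc hchain J hJ
    have hquasi : QuasiStarIdeal (finTypeOp star) (sSup c) :=
      quasiStarIdeal_finTypeOp_sSup hstar ⟨J, hJ⟩ hchain.directedOn fun L hL => (hc hL).1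
    have hlt_top : sSup c < ⊤ :=
      CompleteLattice.IsCompactElement.directed_sSup_lt_of_lt Ideal.isCompactElement_top ⟨J, hJ⟩
        hchain.directedOn fun L hL => (hc hL).2.lt_top
    exact ⟨sSup c, ⟨hquasi, hlt_top.ne⟩, fun _ => le_sSup⟩
  obtain ⟨M, hIM, hM⟩ := zorn_le_nonempty₀ proper hchains I ⟨hI, hI_top⟩
  exact ⟨M, hIM, hM.prop.1, hM.prop.2, fun J hJ hJ_top hMJ => (hM.eq_of_le ⟨hJ, hJ_top⟩ hMJ).symm⟩

end Semistar

section Statement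

variable {D : Type*} [CommRing D] [IsDomain D]
variable {K : Type*} [Field K] [Algebra D K] [IsFractionRing D K]

/-- `D` an integral domain that is not a field, `⋆` a semistar operation on
`D`. If `D` is a ⋆-almost Dedekind domain, then `D` is a Prüfer ⋆-multiplication domain and
every quasi-⋆_f-prime ideal of `D` is a quasi-⋆_f-maximal ideal of `D`. -/
theorem starADD_implies_starPMD_and_quasiPrimes_are_maximal
    (hD : ¬ IsField D) (star : Submodule D K → Submodule D K)
    (hstar : IsSemistarOperation star) (hADD : StarADD star) :
    StarPMD star ∧
      ∀ P : Ideal D, QuasiStarPrime (finTypeOp star) P → QuasiStarMaximal (finTypeOp star) P := by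
  refine ⟨fun M _ hM => (hADD M hM).isValuationDomain, fun P hP => ?_⟩
  obtain ⟨M, hPM, hM⟩ := hP.2.exists_le_quasiStarMaximal hstar hP.1.ne_top
  have := hP.1
  have := hM.isPrime hstar.finTypeOp
  have := (hADD M hM).dimensionLEOne
  rwa [eq_of_le_of_dimensionLEOne_localization (Localization.AtPrime M) hP.2.1 hPM]

end Statement
end

section
/- Let D be an integral domain and ⋆ a semistar operation on D. If D is ⋆̃-Noetherian, then D_M is a Noetherian ring for each M ∈ M(⋆_f). Conversely, if D has the ⋆_f-finite character property and D_M is Noetherian for each M ∈ M(⋆_f), then D is ⋆̃-Noetherian. -/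
open scoped Pointwise

/-!
The operation `⋆̃` is the spectral operation `E ↦ ⋂ E D_Q` attached to the set `Δ = M(⋆_f)`, whose
members are prime because `(M : b)` is again quasi-`⋆_f` when `M` is. An ideal `I` is closed when
membership in it can be tested locally: `x ∈ I` as soon as every `Q ∈ Δ` has some `s ∉ Q` with
`s x ∈ I`.

Contractions to `D` of nonzero ideals of `D_Q`, `Q ∈ Δ`, are closed, and contraction is an order
embedding, so the chain condition passes from closed ideals to `D_Q`. Conversely, let `c` be a chain
of closed ideals and `0 ≠ d ∈ c 0`. If `Q ∈ Δ` does not contain `d`, every `c n` extends to the unit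
ideal of `D_Q`; at each of the finitely many remaining `Q` the extended chain is eventually
constant. So the chain is eventually constant at all `Q ∈ Δ` simultaneously, hence globally.
-/

section ChainConditions

open Filter

theorem wellFoundedGT_of_forall_not_strictMono {α : Type*} [Preorder α]
    (h : ∀ f : ℕ → α, ¬ StrictMono f) : WellFoundedGT α :=
  ⟨RelEmbedding.wellFounded_iff_isEmpty.2 ⟨fun f => h f fun _ _ hab => f.map_rel_iff.2 hab⟩⟩

theorem eventually_forall_exists_mul_mem {R : Type*} [CommRing R] (Q : Ideal R) [Q.IsPrime]
    [IsNoetherianRing (Localization.AtPrime Q)] (c : ℕ →o Ideal R) :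
    ∀ᶠ n in atTop, ∀ m ≥ n, ∀ x ∈ c m, ∃ s ∉ Q, s * x ∈ c n := by
  let φ := algebraMap R (Localization.AtPrime Q)
  obtain ⟨k, hk⟩ := WellFoundedGT.monotone_chain_condition
    (⟨fun n => (c n).map φ, fun _ _ hab => Ideal.map_mono (c.monotone hab)⟩ :
      ℕ →o Ideal (Localization.AtPrime Q))
  filter_upwards [eventually_ge_atTop k] with n hn m hm x hx
  have hmap : (c m).map φ = (c n).map φ := (hk m (hn.trans hm)).symm.trans (hk n hn)
  exact (IsLocalization.algebraMap_mem_map_algebraMap_iff Q.primeCompl _ _ _).1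
    (hmap ▸ Ideal.mem_map_of_mem φ hx)

end ChainConditions

section QuasiStarIdeals

variable {D : Type*} [CommRing D] {K : Type*} [Field K] [Algebra D K]
variable {op : Submodule D K → Submodule D K}

theorem StarNoetherian.not_strictMono (h : StarNoetherian op) {c : ℕ → Ideal D}
    (hc : ∀ n, QuasiStarIdeal op (c n)) : ¬ StrictMono c := by
  intro hmono
  obtain ⟨n, hn⟩ := h ⟨c, hmono.monotone⟩ hc
  exact (hmono n.lt_succ_self).ne' (hn (n + 1) n.le_succ)

variable [FaithfulSMul D K]

theorem algebraMap_mem_idealExt {I : Ideal D} {x : D} :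
    algebraMap D K x ∈ idealExt K I ↔ x ∈ I :=
  (FaithfulSMul.algebraMap_injective D K).mem_set_image (s := (I : Set D))

theorem quasiStarIdeal_of_forall_mem {I : Ideal D} (hI : I ≠ ⊥)
    (h_le : idealExt K I ≤ op (idealExt K I))
    (h : ∀ x, algebraMap D K x ∈ op (idealExt K I) → x ∈ I) : QuasiStarIdeal op I :=
  ⟨hI, le_antisymm h fun _ hx => h_le (algebraMap_mem_idealExt.2 hx)⟩

theorem QuasiStarIdeal.colon_singleton {I : Ideal D} (hI : QuasiStarIdeal op I)
    (h_mono : Monotone op) (h_le : ∀ E, E ≤ op E)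
    (h_smul : ∀ b : K, b ≠ 0 → ∀ E, (op E).map (LinearMap.mulLeft D b) ≤
      op (E.map (LinearMap.mulLeft D b)))
    {b : D} (hb : b ≠ 0) : QuasiStarIdeal op (I.colon {b}) := by
  have hI_le : I ≤ I.colon {b} := fun x hx =>
    Submodule.mem_colon_singleton.2 (I.mul_mem_right b hx)
  refine quasiStarIdeal_of_forall_mem (ne_bot_of_le_ne_bot hI.1 hI_le) (h_le _) fun x hx => ?_
  have hbK : algebraMap D K b ≠ 0 := by simpa using hb
  have h_map : (idealExt K (I.colon {b})).map (LinearMap.mulLeft D (algebraMap D K b)) ≤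
      idealExt K I := by
    rintro _ ⟨_, ⟨y, hy, rfl⟩, rfl⟩
    refine ⟨y * b, Submodule.mem_colon_singleton.1 hy, ?_⟩
    simp [mul_comm]
  have hbx : algebraMap D K b * algebraMap D K x ∈ op (idealExt K I) :=
    h_mono h_map (h_smul _ hbK _ (Submodule.mem_map_of_mem hx))
  rw [Submodule.mem_colon_singleton, smul_eq_mul, ← hI.2, Submodule.mem_comap]
  simpa [mul_comm] using hbx

theorem QuasiStarMaximal.isPrime_s11 {M : Ideal D} (hM : QuasiStarMaximal op M)
    (h_mono : Monotone op) (h_le : ∀ E, E ≤ op E)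
    (h_smul : ∀ b : K, b ≠ 0 → ∀ E, (op E).map (LinearMap.mulLeft D b) ≤
      op (E.map (LinearMap.mulLeft D b))) : M.IsPrime := by
  obtain ⟨hM_quasi, hM_top, hM_max⟩ := hM
  refine ⟨hM_top, fun {a b} hab => or_iff_not_imp_right.2 fun hb => ?_⟩
  have hb₀ : b ≠ 0 := fun h => hb (h ▸ M.zero_mem)
  have h_colon_ne_top : M.colon {b} ≠ ⊤ := by
    rwa [Ne, Ideal.eq_top_iff_one, Submodule.mem_colon_singleton, one_smul]
  have h_colon : M.colon {b} = M :=
    hM_max _ (hM_quasi.colon_singleton h_mono h_le h_smul hb₀) h_colon_ne_top fun x hx =>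
      Submodule.mem_colon_singleton.2 (M.mul_mem_right b hx)
  exact h_colon ▸ Submodule.mem_colon_singleton.2 hab

end QuasiStarIdeals

section FiniteType

variable {D : Type*} [CommRing D] {K : Type*} [Field K] [Algebra D K]
variable {star : Submodule D K → Submodule D K}

theorem finTypeOp_le_iff {E G : Submodule D K} :
    finTypeOp star E ≤ G ↔ ∀ F : Submodule D K, F ≠ ⊥ → F.FG → F ≤ E → star F ≤ G := by
  simp only [finTypeOp, iSup_le_iff]

theorem le_finTypeOp_of_fg {E F : Submodule D K} (hF : F ≠ ⊥) (hfg : F.FG) (hFE : F ≤ E) :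
    star F ≤ finTypeOp star E :=
  finTypeOp_le_iff.1 le_rfl F hF hfg hFE

variable (star) in
theorem monotone_finTypeOp : Monotone (finTypeOp star) := fun _ _ hEE' =>
  finTypeOp_le_iff.2 fun _ hF hfg hFE => le_finTypeOp_of_fg hF hfg (hFE.trans hEE')

theorem IsSemistarOperation.le_finTypeOp_s11 (hstar : IsSemistarOperation star)
    (E : Submodule D K) : E ≤ finTypeOp star E := by
  intro x hx
  obtain rfl | hx₀ := eq_or_ne x 0
  · exact zero_mem _
  have h_span : Submodule.span D {x} ≠ ⊥ := by rwa [Ne, Submodule.span_singleton_eq_bot]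
  exact le_finTypeOp_of_fg h_span (Submodule.fg_span_singleton x)
    ((Submodule.span_singleton_le_iff_mem x E).2 hx)
    (hstar.le_star h_span (Submodule.mem_span_singleton_self x))

theorem IsSemistarOperation.map_mulLeft_finTypeOp_le_s11 (hstar : IsSemistarOperation star)
    (b : K) (hb : b ≠ 0) (E : Submodule D K) :
    (finTypeOp star E).map (LinearMap.mulLeft D b) ≤
      finTypeOp star (E.map (LinearMap.mulLeft D b)) := by
  rw [Submodule.map_le_iff_le_comap, finTypeOp_le_iff]
  intro F hF hfg hFE
  rw [← Submodule.map_le_iff_le_comap, ← hstar.map_smul b hb hF]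
  have hF_map : F.map (LinearMap.mulLeft D b) ≠ ⊥ := fun h =>
    hF (Submodule.map_injective_of_injective (mul_right_injective₀ hb)
      (h.trans (Submodule.map_bot _).symm))
  exact le_finTypeOp_of_fg hF_map (hfg.map _) (Submodule.map_mono hFE)

end FiniteType

section Spectral

open Filter

variable {D : Type*} [CommRing D] {K : Type*} [Field K] [Algebra D K]

/-- The spectral operation `E ↦ ⋂ {E·D_Q : Q ∈ Δ}` defined by a set `Δ` of ideals of `D`, which are
meant to be prime; `⋆̃` is the case `Δ = M(⋆_f)`. The intersection over `Δ = ∅` is `K`. -/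
def spectralOp (K : Type*) [Field K] [Algebra D K] (Δ : Set (Ideal D)) :
    Submodule D K → Submodule D K :=
  fun E => ⨅ Q ∈ Δ, extendToPrime Q E

theorem mem_extendToPrime {Q : Ideal D} [hQ : Q.IsPrime] {E : Submodule D K} {x : K} :
    x ∈ extendToPrime Q E ↔ ∃ s ∉ Q, algebraMap D K s * x ∈ E := by
  refine ⟨fun hx => ?_, fun hx => Submodule.subset_span hx⟩
  simp only [← Algebra.smul_def]
  induction hx using Submodule.span_induction with
  | mem x hx => simpa only [← Algebra.smul_def, Set.mem_ofPred_eq] using hx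
  | zero => exact ⟨1, Q.one_notMem, by simp⟩
  | add x y _ _ hx hy =>
    obtain ⟨s, hs, hsx⟩ := hx
    obtain ⟨t, ht, hty⟩ := hy
    refine ⟨s * t, hQ.mul_notMem hs ht, ?_⟩
    rw [smul_add, mul_smul, mul_smul, smul_comm s t x]
    exact E.add_mem (E.smul_mem t hsx) (E.smul_mem s hty)
  | smul a x _ hx =>
    obtain ⟨s, hs, hsx⟩ := hx
    exact ⟨s, hs, smul_comm a s x ▸ E.smul_mem a hsx⟩

theorem le_extendToPrime {Q : Ideal D} (hQ : Q ≠ ⊤) (E : Submodule D K) :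
    E ≤ extendToPrime Q E := fun x hx =>
  Submodule.subset_span ⟨1, Q.ne_top_iff_one.1 hQ, by simpa using hx⟩

theorem le_spectralOp {Δ : Set (Ideal D)} (hΔ : ∀ Q ∈ Δ, Q ≠ ⊤) (E : Submodule D K) :
    E ≤ spectralOp K Δ E :=
  le_iInf₂ fun Q hQ => le_extendToPrime (hΔ Q hQ) E

variable [FaithfulSMul D K]

theorem algebraMap_mem_extendToPrime_idealExt {Q : Ideal D} [Q.IsPrime] {I : Ideal D} {x : D} :
    algebraMap D K x ∈ extendToPrime Q (idealExt K I) ↔ ∃ s ∉ Q, s * x ∈ I := by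
  simp only [mem_extendToPrime, ← map_mul, algebraMap_mem_idealExt]

theorem algebraMap_mem_spectralOp_idealExt {Δ : Set (Ideal D)} (hΔ : ∀ Q ∈ Δ, Q.IsPrime)
    {I : Ideal D} {x : D} :
    algebraMap D K x ∈ spectralOp K Δ (idealExt K I) ↔ ∀ Q ∈ Δ, ∃ s ∉ Q, s * x ∈ I := by
  simp only [spectralOp, Submodule.mem_iInf]
  refine forall₂_congr fun Q hQ => ?_
  have := hΔ Q hQ
  exact algebraMap_mem_extendToPrime_idealExt

theorem quasiStarIdeal_spectralOp_under {Δ : Set (Ideal D)} (hΔ : ∀ Q ∈ Δ, Q ≠ ⊤)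
    {Q : Ideal D} [Q.IsPrime] (hQ : Q ∈ Δ) {J : Ideal (Localization.AtPrime Q)} (hJ : J ≠ ⊥) :
    QuasiStarIdeal (spectralOp K Δ) (J.under D) := by
  have h_map : (J.under D).map (algebraMap D (Localization.AtPrime Q)) = J :=
    IsLocalization.map_under Q.primeCompl _ J
  refine quasiStarIdeal_of_forall_mem (fun h => hJ ?_) (le_spectralOp hΔ _) fun x hx => ?_
  · rw [← h_map, h, Ideal.map_bot]
  · have hx_Q : algebraMap D K x ∈ extendToPrime Q (idealExt K (J.under D)) :=
      iInf₂_le (f := fun P _ => extendToPrime P _) Q hQ hx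
    rw [Ideal.under_def, Ideal.mem_comap, ← h_map,
      IsLocalization.algebraMap_mem_map_algebraMap_iff Q.primeCompl]
    exact algebraMap_mem_extendToPrime_idealExt.1 hx_Q

theorem StarNoetherian.isNoetherianRing_localization {Δ : Set (Ideal D)}
    (hΔ : ∀ Q ∈ Δ, Q ≠ ⊤) (h : StarNoetherian (spectralOp K Δ)) {Q : Ideal D} [Q.IsPrime]
    (hQ : Q ∈ Δ) : IsNoetherianRing (Localization.AtPrime Q) := by
  refine isNoetherian_iff'.2 (wellFoundedGT_of_forall_not_strictMono fun f hf => ?_)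
  -- Only the first term of a strictly increasing chain can be zero.
  have hf_ne_bot (n : ℕ) : f (n + 1) ≠ ⊥ := (hf n.lt_succ_self).ne_bot
  refine h.not_strictMono (fun n => quasiStarIdeal_spectralOp_under hΔ hQ (hf_ne_bot n)) ?_
  exact (IsLocalization.orderEmbedding Q.primeCompl _).strictMono.comp
    (hf.comp (strictMono_id.add_const 1))

theorem starNoetherian_spectralOp_of_isNoetherianRing {Δ : Set (Ideal D)}
    (hΔ : ∀ Q ∈ Δ, Q.IsPrime) (hfin : ∀ d : D, d ≠ 0 → {Q | Q ∈ Δ ∧ d ∈ Q}.Finite)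
    (hloc : ∀ (Q : Ideal D) [Q.IsPrime], Q ∈ Δ → IsNoetherianRing (Localization.AtPrime Q)) :
    StarNoetherian (spectralOp K Δ) := by
  intro c hc
  obtain ⟨d, hd, hd₀⟩ := Submodule.exists_mem_ne_zero_of_ne_bot (hc 0).1
  have h_stab : ∀ᶠ n in atTop, ∀ Q ∈ {Q | Q ∈ Δ ∧ d ∈ Q},
      ∀ m ≥ n, ∀ x ∈ c m, ∃ s ∉ Q, s * x ∈ c n := by
    refine (eventually_all_finite (hfin d hd₀)).2 fun Q hQ => ?_
    have := hΔ Q hQ.1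
    have := hloc Q hQ.1
    exact eventually_forall_exists_mul_mem Q c
  obtain ⟨n, hn⟩ := h_stab.exists
  refine ⟨n, fun m hm => le_antisymm (fun x hx => ?_) (c.monotone hm)⟩
  rw [← (hc n).2]
  refine (algebraMap_mem_spectralOp_idealExt hΔ).2 fun Q hQ => ?_
  by_cases hdQ : d ∈ Q
  · exact hn Q ⟨hQ, hdQ⟩ m hm x hx
  · exact ⟨d, hdQ, (c n).mul_mem_right x (c.monotone n.zero_le hd)⟩

theorem stableOp_noetherian_localizations_general {Δ : Set (Ideal D)}
    (hΔ : ∀ Q ∈ Δ, Q.IsPrime) :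
    (StarNoetherian (spectralOp K Δ) →
      ∀ (Q : Ideal D) [Q.IsPrime], Q ∈ Δ → IsNoetherianRing (Localization.AtPrime Q)) ∧
    ((∀ d : D, d ≠ 0 → {Q | Q ∈ Δ ∧ d ∈ Q}.Finite) →
      (∀ (Q : Ideal D) [Q.IsPrime], Q ∈ Δ → IsNoetherianRing (Localization.AtPrime Q)) →
      StarNoetherian (spectralOp K Δ)) :=
  ⟨fun h _ _ hQ => h.isNoetherianRing_localization (fun P hP => (hΔ P hP).ne_top) hQ,
    starNoetherian_spectralOp_of_isNoetherianRing hΔ⟩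

end Spectral

section Statement

variable {D : Type*} [CommRing D] [IsDomain D]
variable {K : Type*} [Field K] [Algebra D K] [IsFractionRing D K]

/-- `D` an integral domain, `⋆` a semistar operation on `D`. If `D` is
⋆̃-Noetherian then `D_M` is Noetherian for each quasi-⋆_f-maximal ideal `M`; conversely, if
`D` has the ⋆_f-finite character property and `D_M` is Noetherian for each quasi-⋆_f-maximal
ideal `M`, then `D` is ⋆̃-Noetherian. -/
theorem stableOp_noetherian_localizations
    (star : Submodule D K → Submodule D K) (hstar : IsSemistarOperation star) :
    (StarNoetherian (stableOp star) →
      ∀ (M : Ideal D) [M.IsPrime], QuasiStarMaximal (finTypeOp star) M →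
        IsNoetherianRing (Localization.AtPrime M)) ∧
    (StarFiniteCharacter star →
      (∀ (M : Ideal D) [M.IsPrime], QuasiStarMaximal (finTypeOp star) M →
        IsNoetherianRing (Localization.AtPrime M)) →
      StarNoetherian (stableOp star)) := by
  exact stableOp_noetherian_localizations_general (Δ := {M | QuasiStarMaximal (finTypeOp star) M})
    fun _ hM => QuasiStarMaximal.isPrime_s11 hM
      (monotone_finTypeOp star) hstar.le_finTypeOp_s11 hstar.map_mulLeft_finTypeOp_le_s11

end Statement
end
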